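/- For every t > 0, the total surviving mass of the absorbing-boundary solution is given explicitly by Q(t) = ∫_{−∞}^{L} p(x, t) dx = Φ((L − x₀ − νt)/√(2Dt)) − e^{(ν/D)(L − x₀)} · Φ((x₀ − L − νt)/√(2Dt)), where Φ is the standard normal cumulative distribution function. -/

import Mathlib

open Real MeasureTheory

/-- The free advection–diffusion kernel `U(x, t, η)`. -/
noncomputable def U (D ν : ℝ) (x t η : ℝ) : ℝ :=
  (1 / Real.sqrt (4 * Real.pi * D * t)) * Real.exp (-(x - η - ν * t) ^ 2 / (4 * D * t))

/-- The absorbing-boundary solution `p(x, t) = U(x, t, x₀) − e^{(ν/D)(L − x₀)} U(x, t, 2L − x₀)`. -/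
noncomputable def pAbs (D ν L x₀ : ℝ) (x t : ℝ) : ℝ :=
  U D ν x t x₀ - Real.exp ((ν / D) * (L - x₀)) * U D ν x t (2 * L - x₀)

/-- The standard normal cumulative distribution function. -/
noncomputable def stdNormalCDF (z : ℝ) : ℝ :=
  ∫ u in Set.Iic z, (1 / Real.sqrt (2 * Real.pi)) * Real.exp (-u ^ 2 / 2)

/-!
The free kernel is the density of a Gaussian with mean `η + ν t` and variance `2 D t`. Standardizing
that Gaussian turns its mass on `(-∞, L]` into `Φ((L - η - ν t) / √(2 D t))`, and `p` is a linear
combination of two such kernels, whose sources `x₀` and `2 L - x₀` are mirror images in `L`.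
-/

open ProbabilityTheory
open scoped NNReal

lemma gaussianReal_map_standardize (μ : ℝ) {v : ℝ≥0} (hv : v ≠ 0) :
    (gaussianReal μ v).map (fun x => (x - μ) / √v) = gaussianReal 0 1 := by
  have hvar : v / .mk (√v ^ 2) (sq_nonneg _) = 1 := by
    ext
    simp [hv]
  calc (gaussianReal μ v).map (fun x => (x - μ) / √v)
      = ((gaussianReal μ v).map (· - μ)).map (· / √v) :=
        (Measure.map_map (measurable_id.div_const _) (measurable_id.sub_const _)).symm
    _ = gaussianReal 0 1 := by
        rw [gaussianReal_map_sub_const, gaussianReal_map_div_const, sub_self, zero_div, hvar]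

lemma setIntegral_gaussianPDFReal (μ : ℝ) {v : ℝ≥0} (hv : v ≠ 0) (s : Set ℝ) :
    ∫ x in s, gaussianPDFReal μ v x = (gaussianReal μ v).real s := by
  rw [measureReal_def, gaussianReal_apply_eq_integral μ hv, ENNReal.toReal_ofReal]
  exact integral_nonneg (gaussianPDFReal_nonneg μ v)

lemma stdNormalCDF_eq_gaussianReal_Iic (z : ℝ) :
    stdNormalCDF z = (gaussianReal 0 1).real (Set.Iic z) := by
  rw [← setIntegral_gaussianPDFReal 0 one_ne_zero]
  simp [stdNormalCDF, gaussianPDFReal]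

lemma gaussianReal_real_Iic (μ : ℝ) {v : ℝ≥0} (hv : v ≠ 0) (a : ℝ) :
    (gaussianReal μ v).real (Set.Iic a) = stdNormalCDF ((a - μ) / √v) := by
  have hpreimage : (fun x => (x - μ) / √v) ⁻¹' Set.Iic ((a - μ) / √v) = Set.Iic a := by
    ext x
    have hsd : 0 < √(v : ℝ) := by positivity
    simp [div_le_div_iff_of_pos_right hsd]
  rw [stdNormalCDF_eq_gaussianReal_Iic, ← gaussianReal_map_standardize μ hv,
    map_measureReal_apply (by fun_prop) measurableSet_Iic, hpreimage]

section Kernel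

variable {D t : ℝ}

lemma U_eq_gaussianPDFReal (hDt : 0 < D * t) (ν η x : ℝ) :
    U D ν x t η = gaussianPDFReal (η + ν * t) (2 * (D * t)).toNNReal x := by
  rw [U, gaussianPDFReal, Real.coe_toNNReal _ (by positivity), one_div]
  ring_nf

lemma integrable_U (hDt : 0 < D * t) (ν η : ℝ) : Integrable fun x => U D ν x t η := by
  simp_rw [U_eq_gaussianPDFReal hDt]
  exact integrable_gaussianPDFReal _ _

lemma integral_Iic_U (hDt : 0 < D * t) (ν η a : ℝ) :
    ∫ x in Set.Iic a, U D ν x t η = stdNormalCDF ((a - η - ν * t) / √(2 * D * t)) := by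
  have hvar : (2 * (D * t)).toNNReal ≠ 0 := (Real.toNNReal_pos.2 (by positivity)).ne'
  simp_rw [U_eq_gaussianPDFReal hDt]
  rw [setIntegral_gaussianPDFReal _ hvar, gaussianReal_real_Iic _ hvar,
    Real.coe_toNNReal _ (by positivity), sub_sub, mul_assoc]

theorem pAbs_surviving_mass_general (hDt : 0 < D * t) (ν L x₀ : ℝ) :
    ∫ x in Set.Iic L, pAbs D ν L x₀ x t =
      stdNormalCDF ((L - x₀ - ν * t) / √(2 * D * t))
        - exp ((ν / D) * (L - x₀)) * stdNormalCDF ((x₀ - L - ν * t) / √(2 * D * t)) := by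
  have hreflect : L - (2 * L - x₀) = x₀ - L := by ring
  simp only [pAbs]
  rw [integral_sub (integrable_U hDt ν x₀).integrableOn
      ((integrable_U hDt ν (2 * L - x₀)).const_mul _).integrableOn,
    integral_const_mul, integral_Iic_U hDt, integral_Iic_U hDt, hreflect]

end Kernel

/-- For every `t > 0`, the total surviving mass of the absorbing-boundary solution is
`Q(t) = Φ((L − x₀ − νt)/√(2Dt)) − e^{(ν/D)(L − x₀)} Φ((x₀ − L − νt)/√(2Dt))`. -/
theorem pAbs_surviving_mass (D ν L x₀ : ℝ) (hD : 0 < D) (hx₀ : x₀ < L) :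
    ∀ t : ℝ, 0 < t →
      ∫ x in Set.Iic L, pAbs D ν L x₀ x t =
        stdNormalCDF ((L - x₀ - ν * t) / Real.sqrt (2 * D * t))
          - Real.exp ((ν / D) * (L - x₀)) *
            stdNormalCDF ((x₀ - L - ν * t) / Real.sqrt (2 * D * t)) :=
  fun _ ht => pAbs_surviving_mass_general (mul_pos hD ht) ν L x₀
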